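/- Let n ≥ 2, 1 ≤ l < n, and 0 < p < 1, and set p' = 2p(1−p). Let F be a random function from {0,1}^n to {0,1} on a probability space S such that the family (F(·)(x))_{x ∈ {0,1}^n} is 4-wise independent with P(F(·)(x) = 1) = p for every x. If 2^{3l} ≤ 2^n·p', then with probability at least 1/2 all 2^l subfunctions F_α, α ∈ {0,1}^l, obtained by fixing the first l input bits according to α, are pairwise distinct. -/

import Mathlib

open MeasureTheory

/-- `subInput n l α z` is the input in `{0,1}^n` whose first `l` bits are given
by `α` and whose remaining `n − l` bits are given by `z`. -/
def subInput (n l : ℕ) (α : Fin l → Bool) (z : Fin (n - l) → Bool) :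
    Fin n → Bool :=
  fun i =>
    if h : (i : ℕ) < l then α ⟨i, h⟩
    else z ⟨(i : ℕ) - l, by have := i.isLt; omega⟩


set_option maxHeartbeats 1000000

theorem aux_sub_inj (n l : ℕ) (hln : l < n) (α β : Fin l → Bool) (z w : Fin (n - l) → Bool)
    (h : subInput n l α z = subInput n l β w) : α = β ∧ z = w := by
  constructor
  · funext i
    have := congrFun h ⟨i, by omega⟩
    simpa [subInput] using this
  · funext i
    have := congrFun h ⟨l + i, by omega⟩
    simpa [subInput] using this

theorem aux_integrable {Ω : Type*} [MeasurableSpace Ω] (μ : Measure Ω)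
    [IsProbabilityMeasure μ] (n : ℕ) (F : Ω → (Fin n → Bool) → Bool)
    (hmeas : ∀ x, Measurable (fun s => F s x)) (G : ((Fin n → Bool) → Bool) → ℝ) :
    Integrable (fun s => G (F s)) μ := by
  have hF : Measurable F := measurable_pi_iff.2 hmeas
  have : IsFiniteMeasure (μ.map F) := inferInstance
  have : Integrable G (μ.map F) := Integrable.of_finite
  exact this.comp_measurable hF

theorem aux_expect {Ω : Type*} [MeasurableSpace Ω] (μ : Measure Ω)
    [IsProbabilityMeasure μ] (n : ℕ) (F : Ω → (Fin n → Bool) → Bool)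
    (hmeas : ∀ x, Measurable (fun s => F s x)) (p : ℝ)
    (hbias : ∀ x, (μ {s | F s x = true}).toReal = p)
    (hind : ∀ x₁ x₂ x₃ x₄ : Fin n → Bool,
      x₁ ≠ x₂ → x₁ ≠ x₃ → x₁ ≠ x₄ → x₂ ≠ x₃ → x₂ ≠ x₄ → x₃ ≠ x₄ →
      ∀ l₁ l₂ l₃ l₄ : Bool,
        (μ {s | F s x₁ = l₁ ∧ F s x₂ = l₂ ∧ F s x₃ = l₃ ∧ F s x₄ = l₄}).toReal =
          (μ {s | F s x₁ = l₁}).toReal * (μ {s | F s x₂ = l₂}).toReal *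
          (μ {s | F s x₃ = l₃}).toReal * (μ {s | F s x₄ = l₄}).toReal)
    (x₁ x₂ x₃ x₄ : Fin n → Bool)
    (h12 : x₁ ≠ x₂) (h13 : x₁ ≠ x₃) (h14 : x₁ ≠ x₄) (h23 : x₂ ≠ x₃) (h24 : x₂ ≠ x₄)
    (h34 : x₃ ≠ x₄) (g : Bool → Bool → Bool → Bool → ℝ) :
    ∫ s, g (F s x₁) (F s x₂) (F s x₃) (F s x₄) ∂μ =
      ∑ a : Bool, ∑ b : Bool, ∑ c : Bool, ∑ d : Bool, g a b c d *
        ((if a then p else 1 - p) * (if b then p else 1 - p) *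
          (if c then p else 1 - p) * (if d then p else 1 - p)) := by
  have hF : Measurable F := measurable_pi_iff.2 hmeas
  have hq : ∀ x (b : Bool), (μ {s | F s x = b}).toReal = if b then p else 1 - p := by
    intro x b
    cases b
    · have h1 : {s | F s x = false} = {s | F s x = true}ᶜ := by ext s; simp
      have hm : MeasurableSet {s | F s x = true} := hmeas x (measurableSet_singleton true)
      have := probReal_compl_eq_one_sub (μ := μ) hm
      simp only [Measure.real] at this
      rw [h1, this, hbias]; simp
    · simp [hbias]
  have hterm : ∀ a b c d : Bool,
      ∫ s, g a b c d * (if F s x₁ = a ∧ F s x₂ = b ∧ F s x₃ = c ∧ F s x₄ = d then (1:ℝ) else 0) ∂μ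
       = g a b c d *
        ((if a then p else 1 - p) * (if b then p else 1 - p) *
          (if c then p else 1 - p) * (if d then p else 1 - p)) := by
    intro a b c d
    rw [integral_const_mul, ← hq x₁ a, ← hq x₂ b, ← hq x₃ c, ← hq x₄ d,
      ← hind x₁ x₂ x₃ x₄ h12 h13 h14 h23 h24 h34 a b c d]
    congr 1
    have hm : MeasurableSet {s | F s x₁ = a ∧ F s x₂ = b ∧ F s x₃ = c ∧ F s x₄ = d} :=
      hF (t := {f | f x₁ = a ∧ f x₂ = b ∧ f x₃ = c ∧ f x₄ = d}) (MeasurableSet.of_discrete)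
    have := integral_indicator_one (μ := μ) hm
    rw [Measure.real] at this
    rw [← this]
    congr 1
    ext s
    simp [Set.indicator]
  simp_rw [← hterm]
  have hi : ∀ G : ((Fin n → Bool) → Bool) → ℝ, Integrable (fun s => G (F s)) μ :=
    aux_integrable μ n F hmeas
  simp_rw [Fintype.sum_bool]
  have e : ∀ a b c d : Bool, Integrable (fun s => g a b c d *
      (if F s x₁ = a ∧ F s x₂ = b ∧ F s x₃ = c ∧ F s x₄ = d then (1:ℝ) else 0)) μ :=
    fun a b c d => hi (fun f => g a b c d *
      (if f x₁ = a ∧ f x₂ = b ∧ f x₃ = c ∧ f x₄ = d then (1:ℝ) else 0))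
  have : ∀ s, g (F s x₁) (F s x₂) (F s x₃) (F s x₄) = ∑ t : Bool × Bool × Bool × Bool,
     g t.1 t.2.1 t.2.2.1 t.2.2.2 *
      (if F s x₁ = t.1 ∧ F s x₂ = t.2.1 ∧ F s x₃ = t.2.2.1 ∧ F s x₄ = t.2.2.2 then (1:ℝ) else 0) := by
    intro s
    rw [Finset.sum_eq_single (F s x₁, F s x₂, F s x₃, F s x₄)]
    · simp
    · rintro ⟨a, b, c, d⟩ _ hne
      rw [if_neg, mul_zero]
      rintro ⟨rfl, rfl, rfl, rfl⟩
      exact hne rfl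
    · simp
  simp_rw [this]
  rw [integral_finsetSum _ (fun t _ => e _ _ _ _)]
  simp only [Fintype.sum_prod_type, Fintype.sum_bool]

/-- For a random function `F : {0,1}^n → {0,1}` whose values are
4-wise independent with one-probability `p`, if `2^{3l} ≤ 2^n·p'` with
`p' = 2p(1−p)`, then with probability at least `1/2` all `2^l` subfunctions
`F_α`, `α ∈ {0,1}^l`, are pairwise distinct. -/
theorem stmt_10 {Ω : Type*} [MeasurableSpace Ω] (μ : Measure Ω)
    [IsProbabilityMeasure μ]
    (n l : ℕ) (hn : 2 ≤ n) (hl : 1 ≤ l) (hln : l < n)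
    (p : ℝ) (hp0 : 0 < p) (hp1 : p < 1)
    (F : Ω → (Fin n → Bool) → Bool)
    (hmeas : ∀ x, Measurable (fun s => F s x))
    (hbias : ∀ x, (μ {s | F s x = true}).toReal = p)
    (hind : ∀ x₁ x₂ x₃ x₄ : Fin n → Bool,
      x₁ ≠ x₂ → x₁ ≠ x₃ → x₁ ≠ x₄ → x₂ ≠ x₃ → x₂ ≠ x₄ → x₃ ≠ x₄ →
      ∀ l₁ l₂ l₃ l₄ : Bool,
        (μ {s | F s x₁ = l₁ ∧ F s x₂ = l₂ ∧ F s x₃ = l₃ ∧ F s x₄ = l₄}).toReal =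
          (μ {s | F s x₁ = l₁}).toReal * (μ {s | F s x₂ = l₂}).toReal *
          (μ {s | F s x₃ = l₃}).toReal * (μ {s | F s x₄ = l₄}).toReal)
    (hsize : (2 : ℝ) ^ (3 * l) ≤ 2 ^ n * (2 * p * (1 - p))) :
    1 / 2 ≤ (μ {s | Function.Injective
      (fun α : Fin l → Bool => fun z : Fin (n - l) → Bool =>
        F s (subInput n l α z))}).toReal := by
  
  classical
  have hI := aux_integrable μ n F hmeas
  have hE := aux_expect μ n F hmeas p hbias hind
  have hF : Measurable F := measurable_pi_iff.2 hmeas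
  set q : ℝ := 2 * p * (1 - p) with hq
  have hqpos : 0 < q := by have : 0 < 1 - p := by linarith
                           positivity
  set N : ℝ := 2 ^ (n - l) with hN
  have hNpos : 0 < N := by positivity
  have hNcard : ((Finset.univ : Finset (Fin (n - l) → Bool)).card : ℝ) = N := by
    simp [hN]
  -- the difference indicator
  let D : (Fin l → Bool) → (Fin l → Bool) → (Fin (n - l) → Bool) → ((Fin n → Bool) → Bool) → ℝ :=
    fun α β z f => if f (subInput n l α z) = f (subInput n l β z) then 0 else 1
  have hoff : ∀ α β, α ≠ β → ∀ z w, z ≠ w →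
      ∫ s, (D α β z (F s) - q) * (D α β w (F s) - q) ∂μ = 0 := by
    intro α β hab z w hzw
    have := hE (subInput n l α z) (subInput n l β z) (subInput n l α w) (subInput n l β w)
      (fun h => hab (aux_sub_inj n l hln _ _ _ _ h).1)
      (fun h => hzw (aux_sub_inj n l hln _ _ _ _ h).2)
      (fun h => hab (aux_sub_inj n l hln _ _ _ _ h).1)
      (fun h => hab.symm (aux_sub_inj n l hln _ _ _ _ h).1)
      (fun h => hzw (aux_sub_inj n l hln _ _ _ _ h).2)
      (fun h => hab (aux_sub_inj n l hln _ _ _ _ h).1)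
      (fun a b c d => ((if a = b then 0 else 1) - q) * ((if c = d then 0 else 1) - q))
    refine Eq.trans this ?_
    simp [hq]
    ring
  have hdiag : ∀ α β, α ≠ β → ∀ z,
      ∫ s, (D α β z (F s) - q) * (D α β z (F s) - q) ∂μ ≤ q := by
    intro α β hab z
    obtain ⟨w, hzw⟩ : ∃ w : Fin (n - l) → Bool, z ≠ w :=
      ⟨fun i => !(z i), fun h => by
        have := congrFun h ⟨0, by omega⟩
        simp at this⟩
    have := hE (subInput n l α z) (subInput n l β z) (subInput n l α w) (subInput n l β w)
      (fun h => hab (aux_sub_inj n l hln _ _ _ _ h).1)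
      (fun h => hzw (aux_sub_inj n l hln _ _ _ _ h).2)
      (fun h => hab (aux_sub_inj n l hln _ _ _ _ h).1)
      (fun h => hab.symm (aux_sub_inj n l hln _ _ _ _ h).1)
      (fun h => hzw (aux_sub_inj n l hln _ _ _ _ h).2)
      (fun h => hab (aux_sub_inj n l hln _ _ _ _ h).1)
      (fun a b c d => ((if a = b then 0 else 1) - q) * ((if a = b then 0 else 1) - q))
    refine (le_of_eq (b := q - q ^ 2) (Eq.trans this ?_)).trans (by nlinarith)
    simp [hq]
    ring
  let C : (Fin l → Bool) → (Fin l → Bool) → ((Fin n → Bool) → Bool) → ℝ :=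
    fun α β f => if (∀ z, f (subInput n l α z) = f (subInput n l β z)) then 1 else 0
  have hcol : ∀ α β, α ≠ β → ∫ s, C α β (F s) ∂μ ≤ 1 / (N * q) := by
    intro α β hab
    have h1 : ∫ s, (N * q) ^ 2 * C α β (F s) ∂μ ≤
        ∫ s, ∑ z, ∑ w, (D α β z (F s) - q) * (D α β w (F s) - q) ∂μ := by
      refine integral_mono (hI (fun f => (N * q) ^ 2 * C α β f))
        (hI (fun f => ∑ z, ∑ w, (D α β z f - q) * (D α β w f - q))) ?_
      intro s
      simp only
      rw [← Finset.sum_mul_sum]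
      by_cases h : ∀ z, F s (subInput n l α z) = F s (subInput n l β z)
      · simp only [C, D, h]
        simp only [if_true, Finset.sum_const, nsmul_eq_mul, hNcard, implies_true]
        nlinarith
      · simp only [C, h, if_false, mul_zero]
        exact mul_self_nonneg _
    rw [integral_const_mul, integral_finsetSum _ (fun z _ =>
      hI (fun f => ∑ w, (D α β z f - q) * (D α β w f - q)))] at h1
    have h2 : ∀ z, ∫ s, ∑ w, (D α β z (F s) - q) * (D α β w (F s) - q) ∂μ ≤ q := by
      intro z
      rw [integral_finsetSum _ (fun w _ => hI (fun f => (D α β z f - q) * (D α β w f - q))),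
        Finset.sum_eq_single z (fun w _ hw => hoff α β hab z w hw.symm) (by simp)]
      exact hdiag α β hab z
    have h3 := h1.trans (Finset.sum_le_sum (fun z _ => h2 z))
    rw [Finset.sum_const, nsmul_eq_mul, hNcard] at h3
    have hNq : 0 < N * q := by positivity
    rw [le_div_iff₀ hNq]
    have : (N * q) * ((∫ s, C α β (F s) ∂μ) * (N * q)) ≤ (N * q) * 1 := by nlinarith
    exact le_of_mul_le_mul_left this hNq
  -- Markov
  set I : Set Ω := {s | Function.Injective
      (fun α : Fin l → Bool => fun z : Fin (n - l) → Bool => F s (subInput n l α z))} with hIdef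
  have hmI : MeasurableSet I :=
    hF (t := {f | Function.Injective
      (fun α : Fin l → Bool => fun z : Fin (n - l) → Bool => f (subInput n l α z))})
      MeasurableSet.of_discrete
  let T : Finset ((Fin l → Bool) × (Fin l → Bool)) := Finset.univ.offDiag
  have hbad : 2 * μ.real Iᶜ ≤ ∑ t ∈ T, ∫ s, C t.1 t.2 (F s) ∂μ := by
    rw [← integral_finsetSum _ (fun t _ => hI (C t.1 t.2)),
      ← integral_indicator_one hmI.compl, ← integral_const_mul]
    refine integral_mono (((integrable_const (1:ℝ)).indicator hmI.compl).const_mul 2)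
      (hI (fun f => ∑ t ∈ T, C t.1 t.2 f)) ?_
    intro s
    have hC0 : ∀ α β, 0 ≤ C α β (F s) := by
      intro α β; simp only [C]; split_ifs <;> norm_num
    by_cases hs : s ∈ I
    · simp only [Set.indicator, Set.mem_compl_iff, hs, not_true_eq_false, if_false, mul_zero]
      exact Finset.sum_nonneg (fun t _ => hC0 _ _)
    · simp only [Set.indicator, Set.mem_compl_iff, hs, not_false_eq_true, if_true, Pi.one_apply]
      have hs' := hs
      simp only [hIdef, Set.mem_setOf_eq, Function.Injective] at hs'
      push Not at hs'
      obtain ⟨α, β, hαβ, hne⟩ := hs'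
      have hne2 : (α, β) ≠ (β, α) := by
        intro h; exact hne (Prod.ext_iff.1 h).1
      have hsub : ({(α, β), (β, α)} : Finset _) ⊆ T := by
        intro t ht
        simp only [Finset.mem_insert, Finset.mem_singleton] at ht
        rcases ht with rfl | rfl
        · simp [T, hne]
        · simp [T, hne.symm]
      refine le_trans ?_ (Finset.sum_le_sum_of_subset_of_nonneg hsub (fun t _ _ => hC0 _ _))
      rw [Finset.sum_pair hne2]
      have e1 : C α β (F s) = 1 := if_pos (fun z => congrFun hαβ z)
      have e2 : C β α (F s) = 1 := if_pos (fun z => (congrFun hαβ z).symm)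
      simp only [e1, e2]; norm_num
  have hsum : ∑ t ∈ T, ∫ s, C t.1 t.2 (F s) ∂μ ≤ 1 := by
    have h1 : ∑ t ∈ T, ∫ s, C t.1 t.2 (F s) ∂μ ≤ ∑ t ∈ T, 1 / (N * q) :=
      Finset.sum_le_sum (fun t ht => hcol _ _ (by simpa [T] using ht))
    rw [Finset.sum_const, nsmul_eq_mul] at h1
    have hc : (T.card : ℝ) ≤ 2 ^ l * 2 ^ l := by
      have : T.card ≤ 2 ^ l * 2 ^ l := by
        simp only [T, Finset.offDiag_card]
        simp
      exact_mod_cast this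
    have hNq : 0 < N * q := by positivity
    refine h1.trans ?_
    rw [mul_one_div, div_le_one hNq]
    refine hc.trans ?_
    have e1 : (2:ℝ) ^ n = N * 2 ^ l := by
      rw [hN, ← pow_add]; congr 1; omega
    have e2 : (2:ℝ) ^ (3 * l) = 2 ^ l * (2 ^ l * 2 ^ l) := by
      rw [← pow_add, ← pow_add]; congr 1; omega
    rw [e1, e2] at hsize
    have h2 : (0:ℝ) < 2 ^ l := by positivity
    refine le_of_mul_le_mul_left ?_ h2
    linarith
  have hfin := probReal_compl_eq_one_sub (μ := μ) hmI
  change 1 / 2 ≤ μ.real I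
  linarith
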